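/- arXiv:2103.13608 — 2 statements merged into one kernel-verified Lean document; each statement's English description precedes it below -/
import Mathlib

section
/- Fix N ≥ 1, h > 0, an integer p ≥ 1, C₀ ∈ ℝ, and real N×N matrices D₁, D₂ such that D₁ is antisymmetric (D₁ᵀ = −D₁) and every row sum of D₁ is zero. Let s ≥ 1, τ ∈ ℝ, a : Fin s → Fin s → ℝ, b : Fin s → ℝ. Let u⁰ : Fin N → ℝ, v⁰ ∈ ℝ, and let stage values U_i : Fin N → ℝ, V_i ∈ ℝ satisfy ⟨U_i^{⊙p}, U_i⟩_h + C₀ > 0 and U_i = u⁰ + τ·∑_j a_{i j}·f(U_j, V_j) for all i, and set u¹ = u⁰ + τ·∑_i b_i·f(U_i, V_i). Then ⟨u¹, 1⟩_h = ⟨u⁰, 1⟩_h, where 1 is the all-ones vector. (Momentum part of Theorem 4.2: the fully discrete SAV–Runge–Kutta scheme conserves the discrete momentum exactly.) -/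
/-!
Momentum is `h` times the sum of the entries of `u`, a linear functional, so it suffices that it
vanishes on every stage slope `f(U i, V i)`. Each slope lies in the range of `D₁`, whose column
sums vanish because it is antisymmetric with zero row sums (`sum_mulVec_eq_zero`). The
coefficients of the Runge–Kutta method play no role.
-/

open scoped BigOperators

noncomputable section

/-- Discrete inner product `⟨u, w⟩_h = h·∑ j, u j * w j`. -/
def dip {N : ℕ} (h : ℝ) (u w : Fin N → ℝ) : ℝ := h * ∑ j, u j * w j

/-- Componentwise power `u^{⊙p}`. -/
def pw {N : ℕ} (p : ℕ) (u : Fin N → ℝ) : Fin N → ℝ := fun j => (u j) ^ p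

/-- The SAV square root `r(u) = √(⟨u^{⊙p}, u⟩_h + C₀)`. -/
def rad {N : ℕ} (h : ℝ) (p : ℕ) (C₀ : ℝ) (u : Fin N → ℝ) : ℝ :=
  Real.sqrt (dip h (pw p u) u + C₀)

/-- The SAV vector field `f(u, v) = −D₁·(D₂·u + (v/(p·r(u)))·u^{⊙p})`. -/
def fSAV {N : ℕ} (h : ℝ) (p : ℕ) (C₀ : ℝ) (D₁ D₂ : Matrix (Fin N) (Fin N) ℝ)
    (u : Fin N → ℝ) (v : ℝ) : Fin N → ℝ :=
  -(D₁.mulVec (D₂.mulVec u + (v / ((p : ℝ) * rad h p C₀ u)) • pw p u))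

/-- The SAV scalar field `g(u, v) = ((p+1)/(2·r(u)))·⟨u^{⊙p}, f(u, v)⟩_h`. -/
def gSAV {N : ℕ} (h : ℝ) (p : ℕ) (C₀ : ℝ) (D₁ D₂ : Matrix (Fin N) (Fin N) ℝ)
    (u : Fin N → ℝ) (v : ℝ) : ℝ :=
  (((p : ℝ) + 1) / (2 * rad h p C₀ u)) * dip h (pw p u) (fSAV h p C₀ D₁ D₂ u v)

/-- Antisymmetry turns the zero row sums of `D` into zero column sums, so the entries of any
vector in the range of `D` sum to zero. -/
theorem sum_mulVec_eq_zero {N : ℕ} (D : Matrix (Fin N) (Fin N) ℝ)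
    (hD : D.transpose = -D) (hrow : ∀ i, ∑ j, D i j = 0) (w : Fin N → ℝ) :
    ∑ k, D.mulVec w k = 0 := by
  have hcol : ∀ j, ∑ k, D k j = 0 := fun j => by
    have hentry : ∀ k, D k j = -D j k := fun k => congrFun (congrFun hD j) k
    simp only [hentry, Finset.sum_neg_distrib, hrow, neg_zero]
  simp only [Matrix.mulVec, dotProduct]
  rw [Finset.sum_comm]
  simp only [← Finset.sum_mul, hcol, zero_mul, Finset.sum_const_zero]

/-- Momentum part of Theorem 4.2: the fully discrete SAV–Runge–Kutta scheme conserves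
the discrete momentum exactly. -/
theorem fully_discrete_momentum_conserved
    (N : ℕ) (hN : 1 ≤ N) (h : ℝ) (hh : 0 < h) (p : ℕ) (hp : 1 ≤ p) (C₀ : ℝ)
    (D₁ D₂ : Matrix (Fin N) (Fin N) ℝ)
    (hD₁ : D₁.transpose = -D₁) (hrow : ∀ i, ∑ j, D₁ i j = 0)
    (s : ℕ) (hs : 1 ≤ s) (τ : ℝ) (a : Fin s → Fin s → ℝ) (b : Fin s → ℝ)
    (u0 : Fin N → ℝ) (v0 : ℝ)
    (U : Fin s → Fin N → ℝ) (V : Fin s → ℝ)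
    (hpos : ∀ i, 0 < dip h (pw p (U i)) (U i) + C₀)
    (hU : ∀ i, U i = u0 + τ • ∑ j, a i j • fSAV h p C₀ D₁ D₂ (U j) (V j))
    (u1 : Fin N → ℝ) (hu1 : u1 = u0 + τ • ∑ i, b i • fSAV h p C₀ D₁ D₂ (U i) (V i)) :
    dip h u1 (fun _ => 1) = dip h u0 (fun _ => 1) := by
  have key : ∀ i, ∑ k, fSAV h p C₀ D₁ D₂ (U i) (V i) k = 0 := fun i => by
    simp only [fSAV, Pi.neg_apply, Finset.sum_neg_distrib,
      sum_mulVec_eq_zero D₁ hD₁ hrow, neg_zero]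
  have hsum : ∑ k, u1 k = ∑ k, u0 k := by
    simp only [hu1, Pi.add_apply, Pi.smul_apply, Finset.sum_apply, smul_eq_mul,
      Finset.sum_add_distrib, ← Finset.mul_sum]
    rw [Finset.sum_comm]
    simp only [← Finset.mul_sum, key, mul_zero, Finset.sum_const_zero, add_zero]
  simp only [dip, mul_one, hsum]
end
end

section
/- Fix N ≥ 1, h > 0, an integer p ≥ 1, C₀ ∈ ℝ, τ > 0, and real N×N matrices D₁, D₂ such that D₁ is antisymmetric (D₁ᵀ = −D₁) and D₂ is symmetric (D₂ᵀ = D₂). Let u⁻, u⁰, u⁺ : Fin N → ℝ and v⁻, v⁺ ∈ ℝ with ⟨(u⁰)^{⊙p}, u⁰⟩_h + C₀ > 0; set q = (u⁰)^{⊙p}/√(⟨(u⁰)^{⊙p}, u⁰⟩_h + C₀), ũ = (u⁺ + u⁻)/2 and ṽ = (v⁺ + v⁻)/2, and suppose the SAV–Leap-Frog relations (u⁺ − u⁻)/(2τ) + D₁·(D₂·ũ + (ṽ/p)·q) = 0 and v⁺ − v⁻ = ((p+1)/2)·⟨q, u⁺ − u⁻⟩_h hold. Then −(1/2)·⟨D₂·u⁺,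 u⁺⟩_h − (1/(p·(p+1)))·((v⁺)² − C₀) = −(1/2)·⟨D₂·u⁻, u⁻⟩_h − (1/(p·(p+1)))·((v⁻)² − C₀). (Modified-energy part of Proposition 5.2: the SAV–Leap-Frog scheme conserves the discrete modified energy.) -/
/-!
Write `w = D₂ ũ + (ṽ / p) q`, the discrete variational derivative of the energy up to sign. The
energy increment over one step equals `-⟨w, u⁺ - u⁻⟩_h`: the quadratic part because `D₂` is
symmetric (polarization), the `v` part by the second relation of the scheme. By the first relation
`u⁺ - u⁻` is a multiple of `D₁ w`, and `⟨w, D₁ w⟩ = 0` since `D₁` is antisymmetric.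
-/

open scoped BigOperators

noncomputable section

open Matrix in
lemma dotProduct_mulVec_self_of_antisymm {N : ℕ} {D : Matrix (Fin N) (Fin N) ℝ}
    (hD : D.transpose = -D) (w : Fin N → ℝ) : w ⬝ᵥ D.mulVec w = 0 := by
  have h1 : w ⬝ᵥ D.mulVec w = -(w ⬝ᵥ D.mulVec w) := by
    conv_lhs => rw [dotProduct_mulVec, ← mulVec_transpose, hD, neg_mulVec, neg_dotProduct,
      dotProduct_comm]
  linarith

open Matrix in
/-- Polarization of the quadratic form of a symmetric matrix. -/
lemma mulVec_add_dotProduct_sub_of_symm {N : ℕ} {D : Matrix (Fin N) (Fin N) ℝ}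
    (hD : D.transpose = D) (a b : Fin N → ℝ) :
    D.mulVec (a + b) ⬝ᵥ (a - b) = D.mulVec a ⬝ᵥ a - D.mulVec b ⬝ᵥ b := by
  have h1 : D.mulVec a ⬝ᵥ b = D.mulVec b ⬝ᵥ a := by
    rw [dotProduct_comm, dotProduct_mulVec, ← mulVec_transpose, hD]
  rw [mulVec_add, add_dotProduct, dotProduct_sub, dotProduct_sub, h1]
  ring

lemma dip_eq_dotProduct {N : ℕ} (h : ℝ) (u w : Fin N → ℝ) : dip h u w = h * (u ⬝ᵥ w) := rfl

/-- Modified-energy part of Proposition 5.2: the SAV–Leap-Frog scheme conserves the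
discrete modified energy. -/
theorem SAV_LF_energy_conserved
    (N : ℕ) (hN : 1 ≤ N) (h : ℝ) (hh : 0 < h) (p : ℕ) (hp : 1 ≤ p) (C₀ : ℝ)
    (τ : ℝ) (hτ : 0 < τ)
    (D₁ D₂ : Matrix (Fin N) (Fin N) ℝ)
    (hD₁ : D₁.transpose = -D₁) (hD₂ : D₂.transpose = D₂)
    (um uz up : Fin N → ℝ) (vm vp : ℝ)
    (hpos : 0 < dip h (pw p uz) uz + C₀)
    (q : Fin N → ℝ)
    (hq : q = (Real.sqrt (dip h (pw p uz) uz + C₀))⁻¹ • pw p uz)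
    (ut : Fin N → ℝ) (hut : ut = (1 / 2 : ℝ) • (up + um))
    (vt : ℝ) (hvt : vt = (vp + vm) / 2)
    (hLF1 : (1 / (2 * τ)) • (up - um) + D₁.mulVec (D₂.mulVec ut + (vt / (p : ℝ)) • q) = 0)
    (hLF2 : vp - vm = (((p : ℝ) + 1) / 2) * dip h q (up - um)) :
    -(1 / 2 : ℝ) * dip h (D₂.mulVec up) up
        - (1 / ((p : ℝ) * ((p : ℝ) + 1))) * (vp ^ 2 - C₀)
      = -(1 / 2 : ℝ) * dip h (D₂.mulVec um) um
        - (1 / ((p : ℝ) * ((p : ℝ) + 1))) * (vm ^ 2 - C₀) := by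
  have hp0 : (p : ℝ) ≠ 0 := by positivity
  have hp1 : (p : ℝ) + 1 ≠ 0 := by positivity
  have horth : (D₂.mulVec ut + (vt / (p : ℝ)) • q) ⬝ᵥ (up - um) = 0 := by
    have h1 := congrArg (fun x => (D₂.mulVec ut + (vt / (p : ℝ)) • q) ⬝ᵥ x) hLF1
    simp only [dotProduct_add, dotProduct_smul, dotProduct_zero, smul_eq_mul,
      dotProduct_mulVec_self_of_antisymm hD₁, add_zero] at h1
    exact (mul_eq_zero.mp h1).resolve_left (by positivity)
  have hpol := mulVec_add_dotProduct_sub_of_symm hD₂ up um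
  rw [hut, Matrix.mulVec_smul, add_dotProduct, smul_dotProduct, smul_dotProduct, hpol,
    smul_eq_mul, smul_eq_mul, hvt] at horth
  rw [dip_eq_dotProduct] at hLF2 ⊢
  rw [dip_eq_dotProduct]
  have hv : 1 / ((p : ℝ) * ((p : ℝ) + 1)) * (vp ^ 2 - vm ^ 2)
      = h * ((vp + vm) / 2 / (p : ℝ) * (q ⬝ᵥ (up - um))) := by
    rw [show vp ^ 2 - vm ^ 2 = (vp + vm) * (vp - vm) by ring, hLF2]
    field_simp
  linear_combination -h * horth - hv
end
end
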